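/- Let Ω be an open subset of ℝⁿ, let f = (u₁, v₁) and g = (u₂, v₂) be H-continuous pairs on Ω, and let (f_k) and (g_k) be order-Cauchy sequences of continuous real functions on Ω which order converge to f and to g respectively. Then the sequence (f_k + g_k) order converges to f ⊕ g, the unique H-continuous pair (p_l, p_u) with u₁(x) + u₂(x) ≤ p_l(x) ≤ p_u(x) ≤ v₁(x) + v₂(x) for all x ∈ Ω. -/

import Mathlib

open Set

/-- Points of `ℝⁿ`. -/
abbrev Pt (n : ℕ) := EuclideanSpace ℝ (Fin n)

/-- Lower Baire operator `I(D,Ω,f)(x) = sup_{δ>0} inf { f y : y ∈ B_δ(x) ∩ D }`,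
where `B_δ(x) = { y ∈ Ω : ‖y - x‖ < δ }`. -/
noncomputable def Ilow {n : ℕ} (D Om : Set (Pt n)) (f : Pt n → ℝ) (x : Pt n) : ℝ :=
  sSup {a : ℝ | ∃ δ : ℝ, 0 < δ ∧
    a = sInf (f '' {y | y ∈ Om ∧ ‖y - x‖ < δ ∧ y ∈ D})}

/-- Upper Baire operator `S(D,Ω,f)(x) = inf_{δ>0} sup { f y : y ∈ B_δ(x) ∩ D }`. -/
noncomputable def Shigh {n : ℕ} (D Om : Set (Pt n)) (f : Pt n → ℝ) (x : Pt n) : ℝ :=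
  sInf {a : ℝ | ∃ δ : ℝ, 0 < δ ∧
    a = sSup (f '' {y | y ∈ Om ∧ ‖y - x‖ < δ ∧ y ∈ D})}

/-- `f`, defined on `D ⊆ Ω`, is locally bounded relative to `Ω`. -/
def LocBddOn {n : ℕ} (Om D : Set (Pt n)) (f : Pt n → ℝ) : Prop :=
  ∀ x ∈ Om, ∃ δ : ℝ, 0 < δ ∧ ∃ M : ℝ,
    ∀ y, y ∈ Om → ‖y - x‖ < δ → y ∈ D → |f y| < M

/-- `(u, v)` encodes an interval-valued function `x ↦ [u x, v x]` on `Om`. -/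
def IntervalPair {n : ℕ} (Om : Set (Pt n)) (u v : Pt n → ℝ) : Prop :=
  LocBddOn Om Om u ∧ LocBddOn Om Om v ∧ ∀ x ∈ Om, u x ≤ v x

/-- The pair `(u, v)` is S-continuous on `Om`: `I(u) = u` and `S(v) = v`. -/
def SCont {n : ℕ} (Om : Set (Pt n)) (u v : Pt n → ℝ) : Prop :=
  ∀ x ∈ Om, Ilow Om Om u x = u x ∧ Shigh Om Om v x = v x

/-- The pair `(u, v)` is Hausdorff continuous on `Om`. -/
def HCont {n : ℕ} (Om : Set (Pt n)) (u v : Pt n → ℝ) : Prop :=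
  ∀ p q : Pt n → ℝ, LocBddOn Om Om p → LocBddOn Om Om q →
    (∀ x ∈ Om, u x ≤ p x ∧ p x ≤ q x ∧ q x ≤ v x) →
    ∀ x ∈ Om, Ilow Om Om p x = u x ∧ Shigh Om Om q x = v x

/-- `(u, v)` is an H-continuous interval pair on `Om`. -/
def HContPair {n : ℕ} (Om : Set (Pt n)) (u v : Pt n → ℝ) : Prop :=
  IntervalPair Om u v ∧ HCont Om u v

/-- Lower endpoint of the pointwise interval product. -/
noncomputable def imin {n : ℕ} (u₁ v₁ u₂ v₂ : Pt n → ℝ) (x : Pt n) : ℝ :=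
  min (min (u₁ x * u₂ x) (u₁ x * v₂ x)) (min (v₁ x * u₂ x) (v₁ x * v₂ x))

/-- Upper endpoint of the pointwise interval product. -/
noncomputable def imax {n : ℕ} (u₁ v₁ u₂ v₂ : Pt n → ℝ) (x : Pt n) : ℝ :=
  max (max (u₁ x * u₂ x) (u₁ x * v₂ x)) (max (v₁ x * u₂ x) (v₁ x * v₂ x))

/-- `(pl, pu)` is the H-continuous pair contained pointwise in the interval sum of
`(u₁, v₁)` and `(u₂, v₂)`, i.e. `(pl, pu) = (u₁,v₁) ⊕ (u₂,v₂)`. -/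
def IsOplus {n : ℕ} (Om : Set (Pt n)) (u₁ v₁ u₂ v₂ pl pu : Pt n → ℝ) : Prop :=
  HContPair Om pl pu ∧
    ∀ x ∈ Om, u₁ x + u₂ x ≤ pl x ∧ pl x ≤ pu x ∧ pu x ≤ v₁ x + v₂ x

/-- `(ql, qu)` is the H-continuous pair contained pointwise in the interval product of
`(u₁, v₁)` and `(u₂, v₂)`, i.e. `(ql, qu) = (u₁,v₁) ⊗ (u₂,v₂)`. -/
def IsOtimes {n : ℕ} (Om : Set (Pt n)) (u₁ v₁ u₂ v₂ ql qu : Pt n → ℝ) : Prop :=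
  HContPair Om ql qu ∧
    ∀ x ∈ Om, imin u₁ v₁ u₂ v₂ x ≤ ql x ∧ ql x ≤ qu x ∧ qu x ≤ imax u₁ v₁ u₂ v₂ x

/-- Pointwise order on interval pairs, restricted to `Om`. -/
def PairLe {n : ℕ} (Om : Set (Pt n)) (p q : (Pt n → ℝ) × (Pt n → ℝ)) : Prop :=
  ∀ x ∈ Om, p.1 x ≤ q.1 x ∧ p.2 x ≤ q.2 x

/-- The sequence `F` of (H-continuous) pairs order converges to the H-continuous pair `p`:
there are an increasing sequence `a` and a decreasing sequence `b` of H-continuous pairs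
with `a k ≤ F k ≤ b k`, such that `p` is a least upper bound of the `a k` and a greatest
lower bound of the `b k` within the H-continuous pairs on `Om`. -/
def OrderConvH {n : ℕ} (Om : Set (Pt n)) (F : ℕ → (Pt n → ℝ) × (Pt n → ℝ))
    (p : (Pt n → ℝ) × (Pt n → ℝ)) : Prop :=
  ∃ a b : ℕ → (Pt n → ℝ) × (Pt n → ℝ),
    (∀ k, HContPair Om (a k).1 (a k).2) ∧
    (∀ k, HContPair Om (b k).1 (b k).2) ∧
    (∀ k, PairLe Om (a k) (a (k + 1))) ∧
    (∀ k, PairLe Om (b (k + 1)) (b k)) ∧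
    (∀ k, PairLe Om (a k) (F k) ∧ PairLe Om (F k) (b k)) ∧
    (∀ k, PairLe Om (a k) p) ∧
    (∀ w : (Pt n → ℝ) × (Pt n → ℝ), HContPair Om w.1 w.2 →
      (∀ k, PairLe Om (a k) w) → PairLe Om p w) ∧
    (∀ k, PairLe Om p (b k)) ∧
    (∀ w : (Pt n → ℝ) × (Pt n → ℝ), HContPair Om w.1 w.2 →
      (∀ k, PairLe Om w (b k)) → PairLe Om w p)

/-- The sequence `f` of continuous real functions on `Om` is order-Cauchy: there is a
decreasing sequence `β` of continuous functions on `Om` whose greatest lower bound (in the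
pointwise order on continuous functions on `Om`) is the zero function, with
`f m - f j ≤ β k` on `Om` whenever `m, j ≥ k`. -/
def OrderCauchySeq {n : ℕ} (Om : Set (Pt n)) (f : ℕ → Pt n → ℝ) : Prop :=
  ∃ β : ℕ → Pt n → ℝ,
    (∀ k, ContinuousOn (β k) Om) ∧
    (∀ k, ∀ x ∈ Om, β (k + 1) x ≤ β k x) ∧
    (∀ k, ∀ x ∈ Om, 0 ≤ β k x) ∧
    (∀ g : Pt n → ℝ, ContinuousOn g Om → (∀ k, ∀ x ∈ Om, g x ≤ β k x) →
      ∀ x ∈ Om, g x ≤ 0) ∧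
    (∀ k m j : ℕ, k ≤ m → k ≤ j → ∀ x ∈ Om, f m x - f j x ≤ β k x)


open Filter Topology

theorem Ilow_eq_neg {n : ℕ} (Om : Set (Pt n)) (f : Pt n → ℝ) (x : Pt n) :
    Ilow Om Om f x = - Shigh Om Om (fun y => - f y) x := by
  unfold Ilow Shigh
  have h1 : ∀ B : Set (Pt n), sSup ((fun y => - f y) '' B) = - sInf (f '' B) := by
    intro B
    rw [Real.sInf_def, neg_neg]
    congr 1
    ext a
    simp only [mem_image, Set.mem_neg]
    constructor
    · rintro ⟨y, hy, rfl⟩; exact ⟨y, hy, by ring⟩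
    · rintro ⟨y, hy, h⟩; exact ⟨y, hy, by linarith⟩
  rw [Real.sInf_def, neg_neg]
  congr 1
  ext a
  simp only [Set.mem_setOf_eq, Set.mem_neg, h1]
  simp only [neg_inj]

theorem LocBddOn_neg {n : ℕ} {Om : Set (Pt n)} {f : Pt n → ℝ} (h : LocBddOn Om Om f) :
    LocBddOn Om Om (fun y => - f y) := by
  intro x hx
  obtain ⟨d, hd, M, hM⟩ := h x hx
  exact ⟨d, hd, M, fun y h1 h2 h3 => by rw [abs_neg]; exact hM y h1 h2 h3⟩

theorem HContPair_neg {n : ℕ} {Om : Set (Pt n)} {u v : Pt n → ℝ} (h : HContPair Om u v) :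
    HContPair Om (fun y => - v y) (fun y => - u y) := by
  obtain ⟨⟨hu, hv, huv⟩, hc⟩ := h
  refine ⟨⟨LocBddOn_neg hv, LocBddOn_neg hu, fun x hx => neg_le_neg (huv x hx)⟩, ?_⟩
  intro p q hp hq hpq x hx
  have := hc (fun y => - q y) (fun y => - p y) (LocBddOn_neg hq) (LocBddOn_neg hp)
    (fun x hx => by obtain ⟨a, b, c⟩ := hpq x hx; refine ⟨?_, ?_, ?_⟩ <;> linarith) x hx
  have e1 := Ilow_eq_neg Om p x
  have e2 := Ilow_eq_neg Om (fun y => - q y) x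
  simp only [neg_neg] at e2
  have e3 : Shigh Om Om q x = Shigh Om Om (fun y => q y) x := rfl
  constructor
  · rw [e1, this.2]
  · rw [e3]; linarith [this.1]

theorem Shigh_bddBelow {n : ℕ} (Om : Set (Pt n)) (f : Pt n → ℝ) {x : Pt n} (hx : x ∈ Om) :
    BddBelow {a : ℝ | ∃ δ : ℝ, 0 < δ ∧
      a = sSup (f '' {y | y ∈ Om ∧ ‖y - x‖ < δ ∧ y ∈ Om})} := by
  refine ⟨min (f x) 0, ?_⟩
  rintro a ⟨d, hd, rfl⟩
  by_cases hb : BddAbove (f '' {y | y ∈ Om ∧ ‖y - x‖ < d ∧ y ∈ Om})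
  · exact (min_le_left _ _).trans (le_csSup hb ⟨x, ⟨hx, by simpa using hd, hx⟩, rfl⟩)
  · rw [Real.sSup_of_not_bddAbove hb]; exact min_le_right _ _

/-- specification of the upper limit. -/
def SSpec {n : ℕ} (h : Pt n → ℝ) (x : Pt n) (s : ℝ) : Prop :=
  (∀ c, s < c → ∀ᶠ y in 𝓝 x, h y < c) ∧ (∀ c, c < s → ∃ᶠ y in 𝓝 x, c < h y)

theorem SSpec_unique {n : ℕ} {h : Pt n → ℝ} {x : Pt n} {s t : ℝ}
    (hs : SSpec h x s) (ht : SSpec h x t) : s = t := by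
  have key : ∀ {s t : ℝ}, SSpec h x s → SSpec h x t → s ≤ t := by
    intro s t hs ht
    by_contra hlt
    push Not at hlt
    obtain ⟨c, h1, h2⟩ := exists_between hlt
    obtain ⟨y, hy1, hy2⟩ := ((hs.2 c h2).and_eventually (ht.1 c h1)).exists
    exact lt_asymm hy1 hy2
  exact le_antisymm (key hs ht) (key ht hs)

theorem Shigh_spec {n : ℕ} {Om : Set (Pt n)} (hOm : IsOpen Om) {f : Pt n → ℝ}
    (hb : ∀ R : ℝ, ∃ M : ℝ, ∀ y ∈ Om, ‖y‖ ≤ R → f y ≤ M) {x : Pt n} (hx : x ∈ Om)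
     : (∀ c, Shigh Om Om f x < c → ∀ᶠ y in 𝓝 x, f y < c) ∧
       (∀ c, c < Shigh Om Om f x → ∃ᶠ y in 𝓝 x, c < f y) := by
  have hbd : ∀ d : ℝ, BddAbove (f '' {y | y ∈ Om ∧ ‖y - x‖ < d ∧ y ∈ Om}) := by
    intro d
    obtain ⟨M, hM⟩ := hb (‖x‖ + d)
    refine ⟨M, ?_⟩
    rintro _ ⟨y, ⟨hy, hyd, -⟩, rfl⟩
    apply hM y hy
    have := norm_add_le (y - x) x
    rw [sub_add_cancel] at this
    linarith
  constructor
  · intro c hc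
    obtain ⟨a, ⟨d, hd, rfl⟩, hac⟩ := exists_lt_of_csInf_lt
      (by exact ⟨_, 1, one_pos, rfl⟩) hc
    filter_upwards [hOm.mem_nhds hx, Metric.ball_mem_nhds x hd] with y hy hyd
    rw [Metric.mem_ball, dist_eq_norm] at hyd
    exact (le_csSup (hbd d) ⟨y, ⟨hy, hyd, hy⟩, rfl⟩).trans_lt hac
  · intro c hc
    rw [Metric.nhds_basis_ball.frequently_iff]
    intro d hd
    have h1 : Shigh Om Om f x ≤ _ := csInf_le (Shigh_bddBelow Om f hx) ⟨d, hd, rfl⟩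
    obtain ⟨_, ⟨y, ⟨hy, hyd, -⟩, rfl⟩, hlt⟩ := exists_lt_of_lt_csSup
      (by exact ⟨_, x, ⟨hx, by simpa using hd, hx⟩, rfl⟩) (hc.trans_le h1)
    exact ⟨y, by rwa [Metric.mem_ball, dist_eq_norm], hlt⟩

theorem Shigh_eq {n : ℕ} {Om : Set (Pt n)} (hOm : IsOpen Om) {f : Pt n → ℝ}
    (hb : ∀ R : ℝ, ∃ M : ℝ, ∀ y ∈ Om, ‖y‖ ≤ R → f y ≤ M) {x : Pt n} (hx : x ∈ Om) {s : ℝ}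
    (hs : SSpec f x s) : Shigh Om Om f x = s :=
  SSpec_unique (Shigh_spec hOm hb hx) hs

theorem HContPair_bdd {n : ℕ} {Om : Set (Pt n)} {u v : Pt n → ℝ} (h : HContPair Om u v) :
    ∀ R : ℝ, ∃ M : ℝ, ∀ y ∈ Om, ‖y‖ ≤ R → v y ≤ M := by
  obtain ⟨⟨hu, hv, huv⟩, hc⟩ := h
  intro R
  by_contra hcon
  push Not at hcon
  have hneg : ∀ x ∈ Om, v x ≤ 0 := by
    intro x hx
    have h1 := (hc v v hv hv (fun x hx => ⟨huv x hx, le_rfl, le_rfl⟩) x hx).2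
    have hd : 0 < ‖x‖ + |R| + 1 := by positivity
    have h2 : Shigh Om Om v x ≤ _ := csInf_le (Shigh_bddBelow Om v hx) ⟨_, hd, rfl⟩
    rw [h1, Real.sSup_of_not_bddAbove] at h2
    · exact h2
    · rintro ⟨M, hM⟩
      obtain ⟨y, hy, hyR, hMy⟩ := hcon M
      refine absurd (hM ⟨y, ⟨hy, ?_, hy⟩, rfl⟩) (not_le.mpr hMy)
      have := norm_sub_le y x
      have := le_abs_self R
      linarith
  obtain ⟨y, hy, -, h0⟩ := hcon 0
  exact absurd (hneg y hy) (not_le.mpr h0)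

/-- Filter form of H-continuity. -/
structure HC {n : ℕ} (Om : Set (Pt n)) (u v : Pt n → ℝ) : Prop where
  le : ∀ x ∈ Om, u x ≤ v x
  ba : ∀ R : ℝ, ∃ M : ℝ, ∀ y ∈ Om, ‖y‖ ≤ R → v y ≤ M
  bb : ∀ R : ℝ, ∃ M : ℝ, ∀ y ∈ Om, ‖y‖ ≤ R → -M ≤ u y
  lsc : ∀ x ∈ Om, ∀ c, c < u x → ∀ᶠ y in 𝓝 x, c < u y
  usc : ∀ x ∈ Om, ∀ c, v x < c → ∀ᶠ y in 𝓝 x, v y < c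
  fu : ∀ x ∈ Om, ∀ c, c < v x → ∃ᶠ y in 𝓝 x, c < u y
  fv : ∀ x ∈ Om, ∀ c, u x < c → ∃ᶠ y in 𝓝 x, v y < c

theorem HC.neg {n : ℕ} {Om : Set (Pt n)} {u v : Pt n → ℝ} (h : HC Om u v) :
    HC Om (fun y => - v y) (fun y => - u y) where
  le x hx := neg_le_neg (h.le x hx)
  ba R := by
    obtain ⟨M, hM⟩ := h.bb R
    exact ⟨M, fun y hy hR => by linarith [hM y hy hR]⟩
  bb R := by
    obtain ⟨M, hM⟩ := h.ba R
    exact ⟨M, fun y hy hR => by linarith [hM y hy hR]⟩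
  lsc x hx c hc := (h.usc x hx (-c) (by linarith)).mono fun y hy => by linarith
  usc x hx c hc := (h.lsc x hx (-c) (by linarith)).mono fun y hy => by linarith
  fu x hx c hc := (h.fv x hx (-c) (by linarith)).mono fun y hy => by linarith
  fv x hx c hc := (h.fu x hx (-c) (by linarith)).mono fun y hy => by linarith

theorem HC_of_pair {n : ℕ} {Om : Set (Pt n)} (hOm : IsOpen Om) {u v : Pt n → ℝ}
    (h : HContPair Om u v) : HC Om u v := by
  have half : ∀ {u v : Pt n → ℝ}, HContPair Om u v → 
      (∀ x ∈ Om, ∀ c, v x < c → ∀ᶠ y in 𝓝 x, v y < c) ∧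
      (∀ x ∈ Om, ∀ c, c < v x → ∃ᶠ y in 𝓝 x, c < u y) := by
    intro u v h
    have hbd := HContPair_bdd h
    have hbu : ∀ R : ℝ, ∃ M : ℝ, ∀ y ∈ Om, ‖y‖ ≤ R → u y ≤ M := fun R => by
      obtain ⟨M, hM⟩ := hbd R
      exact ⟨M, fun y hy hR => (h.1.2.2 y hy).trans (hM y hy hR)⟩
    obtain ⟨⟨hu, hv, huv⟩, hc⟩ := h
    constructor
    · intro x hx c hcx
      have e := (hc v v hv hv (fun x hx => ⟨huv x hx, le_rfl, le_rfl⟩) x hx).2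
      exact (Shigh_spec hOm hbd hx).1 c (by rw [e]; exact hcx)
    · intro x hx c hcx
      have e := (hc u u hu hu (fun x hx => ⟨le_rfl, le_rfl, huv x hx⟩) x hx).2
      exact (Shigh_spec hOm hbu hx).2 c (by rw [e]; exact hcx)
  have h' := HContPair_neg h
  refine ⟨h.1.2.2, HContPair_bdd h, ?_, ?_, (half h).1, (half h).2, ?_⟩
  · intro R
    obtain ⟨M, hM⟩ := HContPair_bdd h' R
    exact ⟨M, fun y hy hR => by linarith [hM y hy hR]⟩
  · intro x hx c hc
    exact ((half h').1 x hx (-c) (by linarith)).mono fun y hy => by linarith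
  · intro x hx c hc
    exact ((half h').2 x hx (-c) (by linarith)).mono fun y hy => by linarith

theorem HC.pair {n : ℕ} {Om : Set (Pt n)} (hOm : IsOpen Om) {u v : Pt n → ℝ}
    (h : HC Om u v) : HContPair Om u v := by
  have lb : ∀ w : Pt n → ℝ, (∀ x ∈ Om, u x ≤ w x ∧ w x ≤ v x) → LocBddOn Om Om w := by
    intro w hw x hx
    obtain ⟨M, hM⟩ := h.ba (‖x‖ + 1)
    obtain ⟨N, hN⟩ := h.bb (‖x‖ + 1)
    refine ⟨1, one_pos, max M N + 1, fun y hy hyx _ => ?_⟩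
    have hR : ‖y‖ ≤ ‖x‖ + 1 := by
      have := norm_add_le (y - x) x
      rw [sub_add_cancel] at this
      linarith
    have := hM y hy hR
    have := hN y hy hR
    have := hw y hy
    have := le_max_left M N
    have := le_max_right M N
    rw [abs_lt]
    constructor <;> linarith
  have half : ∀ {u v : Pt n → ℝ}, HC Om u v → ∀ q : Pt n → ℝ,
      (∀ x ∈ Om, u x ≤ q x ∧ q x ≤ v x) → ∀ x ∈ Om, Shigh Om Om q x = v x := by
    intro u v h q hq x hx
    apply Shigh_eq hOm _ hx
    · constructor
      · intro c hc
        filter_upwards [h.usc x hx c hc, hOm.mem_nhds hx] with y hy hyO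
        exact (hq y hyO).2.trans_lt hy
      · intro c hc
        refine ((h.fu x hx c hc).and_eventually (hOm.mem_nhds hx)).mono ?_
        rintro y ⟨hy, hyO⟩
        exact hy.trans_le (hq y hyO).1
    · intro R
      obtain ⟨M, hM⟩ := h.ba R
      exact ⟨M, fun y hy hR => (hq y hy).2.trans (hM y hy hR)⟩
  refine ⟨⟨lb u fun x hx => ⟨le_rfl, h.le x hx⟩, lb v fun x hx => ⟨h.le x hx, le_rfl⟩, h.le⟩, ?_⟩
  intro p q hp hq hpq x hx
  refine ⟨?_, half h q (fun x hx => ⟨(hpq x hx).1.trans (hpq x hx).2.1, (hpq x hx).2.2⟩) x hx⟩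
  rw [Ilow_eq_neg, half h.neg (fun y => - p y) (fun x hx => ?_) x hx, neg_neg]
  obtain ⟨a, b, c⟩ := hpq x hx
  constructor <;> linarith

/-- density of the set where the pair is narrow -/
theorem HC.dense {n : ℕ} {Om : Set (Pt n)} (hOm : IsOpen Om) {u v : Pt n → ℝ}
    (h : HC Om u v) {ε : ℝ} (hε : 0 < ε) {x : Pt n} (hx : x ∈ Om) :
    ∃ᶠ y in 𝓝 x, v y < u y + ε := by
  intro hcon
  have hev := (hcon.and (h.usc x hx (v x + 1) (by linarith))).and (hOm.mem_nhds hx)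
  obtain ⟨V, hV, hVo, hxV⟩ := eventually_nhds_iff.mp hev
  have hbd : BddAbove (u '' V) := by
    refine ⟨v x + 1, ?_⟩
    rintro _ ⟨y, hy, rfl⟩
    obtain ⟨⟨-, h2⟩, h3⟩ := hV y hy
    exact (h.le y h3).trans h2.le
  obtain ⟨_, ⟨y, hy, rfl⟩, hlt⟩ := exists_lt_of_lt_csSup (⟨_, x, hxV, rfl⟩ : (u '' V).Nonempty)
    (show sSup (u '' V) - ε < sSup (u '' V) by linarith)
  obtain ⟨⟨h1, -⟩, h3⟩ := hV y hy
  have h4 : sSup (u '' V) < v y := by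
    have := not_lt.mp h1
    linarith
  obtain ⟨z, hz, hzV⟩ := ((h.fu y h3 _ h4).and_eventually (hVo.mem_nhds hy)).exists
  exact absurd (le_csSup hbd ⟨z, hzV, rfl⟩) (not_le.mpr hz)

theorem HC.dense_and {n : ℕ} {Om : Set (Pt n)} (hOm : IsOpen Om) {u v : Pt n → ℝ}
    (h : HC Om u v) {ε : ℝ} (hε : 0 < ε) {Q : Pt n → Prop}
    (hQ : ∀ x ∈ Om, ∃ᶠ y in 𝓝 x, Q y) :
    ∀ x ∈ Om, ∃ᶠ y in 𝓝 x, (v y < u y + ε ∧ Q y) := by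
  intro x hx
  rw [frequently_nhds_iff]
  intro U hxU hU
  obtain ⟨y, ⟨hy, hyU⟩, hyO⟩ := (((h.dense hOm hε hx).and_eventually
    (hU.mem_nhds hxU)).and_eventually (hOm.mem_nhds hx)).exists
  have e1 := h.usc y hyO ((v y + u y + ε) / 2) (by linarith)
  have e2 := h.lsc y hyO ((v y + u y + ε) / 2 - ε) (by linarith)
  obtain ⟨z, ⟨⟨hz, hz1⟩, hz2⟩, hzU⟩ := ((((hQ y hyO).and_eventually e1).and_eventually
    e2).and_eventually (hU.mem_nhds hyU)).exists
  exact ⟨z, hzU, by linarith, hz⟩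

/-- comparison on a dense set -/
theorem HC.cmp {n : ℕ} {Om : Set (Pt n)} (hOm : IsOpen Om) {u v u' v' : Pt n → ℝ}
    (h : HC Om u v) (h' : HC Om u' v')
    (hd : ∀ ε : ℝ, 0 < ε → ∀ x ∈ Om, ∃ᶠ y in 𝓝 x, (y ∈ Om → u y ≤ v' y + ε)) :
    ∀ x ∈ Om, u x ≤ u' x ∧ v x ≤ v' x := by
  have h0 : ∀ x ∈ Om, u x ≤ v' x := by
    intro x hx
    by_contra hlt
    push Not at hlt
    set ε := (u x - v' x) / 3 with hε
    obtain ⟨y, ⟨⟨hy, hyO⟩, h1⟩, h2⟩ := ((((hd ε (by linarith) x hx).and_eventually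
      (hOm.mem_nhds hx)).and_eventually (h.lsc x hx (u x - ε) (by linarith))).and_eventually
      (h'.usc x hx (v' x + ε) (by linarith))).exists
    have := hy hyO
    linarith
  have hv : ∀ x ∈ Om, v x ≤ v' x := by
    intro x hx
    by_contra hlt
    push Not at hlt
    obtain ⟨c, h1, h2⟩ := exists_between hlt
    obtain ⟨y, ⟨hy1, hy2⟩, hyO⟩ := (((h.fu x hx c h2).and_eventually
      (h'.usc x hx c h1)).and_eventually (hOm.mem_nhds hx)).exists
    linarith [h0 y hyO]
  refine fun x hx => ⟨?_, hv x hx⟩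
  by_contra hlt
  push Not at hlt
  obtain ⟨c, h1, h2⟩ := exists_between hlt
  obtain ⟨y, ⟨hy1, hy2⟩, hyO⟩ := (((h'.fv x hx c h1).and_eventually
    (h.lsc x hx c h2)).and_eventually (hOm.mem_nhds hx)).exists
  linarith [h0 y hyO]

/-- `p` lies in the sum of the pairs -/
structure OP {n : ℕ} (Om : Set (Pt n)) (u₁ v₁ u₂ v₂ pl pu : Pt n → ℝ) : Prop where
  hc : HC Om pl pu
  lo : ∀ x ∈ Om, u₁ x + u₂ x ≤ pl x
  hi : ∀ x ∈ Om, pu x ≤ v₁ x + v₂ x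

theorem OP.comm {n : ℕ} {Om : Set (Pt n)} {u₁ v₁ u₂ v₂ pl pu : Pt n → ℝ}
    (h : OP Om u₁ v₁ u₂ v₂ pl pu) : OP Om u₂ v₂ u₁ v₁ pl pu :=
  ⟨h.hc, fun x hx => by linarith [h.lo x hx], fun x hx => by linarith [h.hi x hx]⟩

theorem OP.neg {n : ℕ} {Om : Set (Pt n)} {u₁ v₁ u₂ v₂ pl pu : Pt n → ℝ}
    (h : OP Om u₁ v₁ u₂ v₂ pl pu) : OP Om (fun y => - v₁ y) (fun y => - u₁ y)
      (fun y => - v₂ y) (fun y => - u₂ y) (fun y => - pu y) (fun y => - pl y) :=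
  ⟨h.hc.neg, fun x hx => by linarith [h.hi x hx], fun x hx => by linarith [h.lo x hx]⟩

theorem exists_SSpec {n : ℕ} {h : Pt n → ℝ} {x : Pt n} {m M : ℝ}
    (hm : ∀ᶠ y in 𝓝 x, m ≤ h y) (hM : ∀ᶠ y in 𝓝 x, h y ≤ M) : ∃ s, SSpec h x s := by
  have hbd : BddBelow {c | ∀ᶠ y in 𝓝 x, h y ≤ c} := by
    refine ⟨m, fun c hc => ?_⟩
    obtain ⟨y, h1, h2⟩ := (hm.and hc).exists
    exact h1.trans h2
  refine ⟨sInf {c | ∀ᶠ y in 𝓝 x, h y ≤ c}, ?_, ?_⟩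
  · intro c hc
    obtain ⟨a, ha, hac⟩ := exists_lt_of_csInf_lt ⟨M, hM⟩ hc
    exact Eventually.mono ha fun y hy => lt_of_le_of_lt hy hac
  · intro c hc hcon
    have : c ∈ {c | ∀ᶠ y in 𝓝 x, h y ≤ c} := hcon.mono fun y hy => not_lt.mp hy
    exact absurd (csInf_le hbd this) (not_le.mpr hc)

theorem SSpec_usc {n : ℕ} {Om : Set (Pt n)} (hOm : IsOpen Om) {h s : Pt n → ℝ}
    (hs : ∀ x ∈ Om, SSpec h x (s x)) :
    ∀ x ∈ Om, ∀ c, s x < c → ∀ᶠ y in 𝓝 x, s y < c := by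
  intro x hx c hc
  obtain ⟨d, h1, h2⟩ := exists_between hc
  filter_upwards [eventually_eventually_nhds.mpr ((hs x hx).1 d h1), hOm.mem_nhds hx] with y hy hyO
  refine lt_of_le_of_lt ?_ h2
  by_contra hlt
  push Not at hlt
  obtain ⟨z, hz1, hz2⟩ := (((hs y hyO).2 d hlt).and_eventually hy).exists
  exact lt_asymm hz1 hz2

theorem SSpec_ge {n : ℕ} {h : Pt n → ℝ} {x : Pt n} {s : ℝ} (hs : SSpec h x s) : h x ≤ s := by
  by_contra hlt
  push Not at hlt
  exact lt_irrefl _ (hs.1 _ hlt).self_of_nhds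

/-- monotonicity of the upper limit under an eventual strict upper bound -/
theorem SSpec_le_of {n : ℕ} {h : Pt n → ℝ} {x : Pt n} {s t : ℝ} (hs : SSpec h x s)
    (ht : ∀ c, t < c → ∀ᶠ y in 𝓝 x, h y < c) : s ≤ t := by
  by_contra hlt
  push Not at hlt
  obtain ⟨c, h1, h2⟩ := exists_between hlt
  obtain ⟨y, hy1, hy2⟩ := ((hs.2 c h2).and_eventually (ht c h1)).exists
  exact lt_asymm hy1 hy2

theorem exists_OP {n : ℕ} {Om : Set (Pt n)} (hOm : IsOpen Om) {u₁ v₁ u₂ v₂ : Pt n → ℝ}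
    (h₁ : HC Om u₁ v₁) (h₂ : HC Om u₂ v₂) : ∃ pl pu, OP Om u₁ v₁ u₂ v₂ pl pu := by
  have lscw : ∀ x ∈ Om, ∀ c, c < u₁ x + u₂ x → ∀ᶠ y in 𝓝 x, c < u₁ y + u₂ y := by
    intro x hx c hc
    set e := (u₁ x + u₂ x - c) / 2 with he
    filter_upwards [h₁.lsc x hx (u₁ x - e) (by linarith), h₂.lsc x hx (u₂ x - e) (by linarith)]
      with y hy1 hy2
    linarith
  have uscw : ∀ x ∈ Om, ∀ c, v₁ x + v₂ x < c → ∀ᶠ y in 𝓝 x, v₁ y + v₂ y < c := by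
    intro x hx c hc
    set e := (c - (v₁ x + v₂ x)) / 2 with he
    filter_upwards [h₁.usc x hx (v₁ x + e) (by linarith), h₂.usc x hx (v₂ x + e) (by linarith)]
      with y hy1 hy2
    linarith
  have hwle : ∀ x ∈ Om, u₁ x + u₂ x ≤ v₁ x + v₂ x := fun x hx =>
    add_le_add (h₁.le x hx) (h₂.le x hx)
  have ex1 : ∀ x, ∃ s, x ∈ Om → SSpec (fun y => u₁ y + u₂ y) x s := by
    intro x
    by_cases hx : x ∈ Om
    · obtain ⟨s, hs⟩ := exists_SSpec (h := fun y => u₁ y + u₂ y) (x := x)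
        (m := u₁ x + u₂ x - 1) (M := v₁ x + v₂ x + 1)
        ((lscw x hx _ (by linarith)).mono fun y hy => hy.le)
        (by filter_upwards [uscw x hx (v₁ x + v₂ x + 1) (by linarith), hOm.mem_nhds hx] with y hy hyO
            exact (hwle y hyO).trans hy.le)
      exact ⟨s, fun _ => hs⟩
    · exact ⟨0, fun h => absurd h hx⟩
  choose s hs using ex1
  have hs_usc := SSpec_usc hOm hs
  have hws : ∀ x ∈ Om, u₁ x + u₂ x ≤ s x := fun x hx => SSpec_ge (hs x hx)
  have hsv : ∀ x ∈ Om, s x ≤ v₁ x + v₂ x := by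
    intro x hx
    refine SSpec_le_of (hs x hx) fun c hc => ?_
    filter_upwards [uscw x hx c hc, hOm.mem_nhds hx] with y hy hyO
    exact (hwle y hyO).trans_lt hy
  have ex2 : ∀ x, ∃ t, x ∈ Om → SSpec (fun y => - s y) x t := by
    intro x
    by_cases hx : x ∈ Om
    · obtain ⟨t, ht⟩ := exists_SSpec (h := fun y => - s y) (x := x)
        (m := - (s x + 1)) (M := - (u₁ x + u₂ x - 1))
        ((hs_usc x hx (s x + 1) (by linarith)).mono fun y hy => by linarith)
        (by filter_upwards [lscw x hx (u₁ x + u₂ x - 1) (by linarith), hOm.mem_nhds hx] with y hy hyO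
            linarith [hws y hyO])
      exact ⟨t, fun _ => ht⟩
    · exact ⟨0, fun h => absurd h hx⟩
  choose t ht using ex2
  have ht_usc := SSpec_usc hOm ht
  have hst : ∀ x ∈ Om, - s x ≤ t x := fun x hx => SSpec_ge (ht x hx)
  have htw : ∀ x ∈ Om, t x ≤ - (u₁ x + u₂ x) := by
    intro x hx
    refine SSpec_le_of (ht x hx) fun c hc => ?_
    filter_upwards [lscw x hx (-c) (by linarith), hOm.mem_nhds hx] with y hy hyO
    linarith [hws y hyO]
  refine ⟨fun x => - t x, s, ⟨?_, ?_, ?_, ?_, hs_usc, ?_, ?_⟩, ?_, hsv⟩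
  · intro x hx
    linarith [hst x hx]
  · intro R
    obtain ⟨M, hM⟩ := h₁.ba R
    obtain ⟨N, hN⟩ := h₂.ba R
    exact ⟨M + N, fun y hy hR => by linarith [hM y hy hR, hN y hy hR, hsv y hy]⟩
  · intro R
    obtain ⟨M, hM⟩ := h₁.bb R
    obtain ⟨N, hN⟩ := h₂.bb R
    exact ⟨M + N, fun y hy hR => by linarith [hM y hy hR, hN y hy hR, htw y hy]⟩
  · intro x hx c hc
    exact (ht_usc x hx (-c) (by linarith)).mono fun y hy => by linarith
  · intro x hx c hc
    refine (((hs x hx).2 c hc).and_eventually (hOm.mem_nhds hx)).mono ?_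
    rintro y ⟨hy, hyO⟩
    linarith [htw y hyO]
  · intro x hx c hc
    exact ((ht x hx).2 (-c) (by linarith)).mono fun y hy => by linarith
  · intro x hx
    linarith [htw x hx]

theorem OP.mono {n : ℕ} {Om : Set (Pt n)} (hOm : IsOpen Om)
    {u₁ v₁ u₂ v₂ pl pu u₁' v₁' u₂' v₂' ql qu : Pt n → ℝ}
    (h₁ : HC Om u₁ v₁) (h₂ : HC Om u₂ v₂)
    (h : OP Om u₁ v₁ u₂ v₂ pl pu) (h' : OP Om u₁' v₁' u₂' v₂' ql qu)
    (l₁ : ∀ x ∈ Om, u₁ x ≤ u₁' x) (l₂ : ∀ x ∈ Om, u₂ x ≤ u₂' x) :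
    ∀ x ∈ Om, pl x ≤ ql x ∧ pu x ≤ qu x := by
  refine h.hc.cmp hOm h'.hc fun ε hε x hx => ?_
  refine (h₁.dense_and hOm (half_pos hε) (fun x hx => h₂.dense hOm (half_pos hε) hx) x hx).mono ?_
  rintro y ⟨a, b⟩ hy
  linarith [h.hc.le y hy, h.hi y hy, h'.lo y hy, h'.hc.le y hy, l₁ y hy, l₂ y hy]

theorem OP.shift {n : ℕ} {Om : Set (Pt n)} (hOm : IsOpen Om)
    {u₁ v₁ u₂ v₂ pl pu wl wu dl du : Pt n → ℝ}
    (h₁ : HC Om u₁ v₁) (h₂ : HC Om u₂ v₂)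
    (h : OP Om u₁ v₁ u₂ v₂ pl pu)
    (hd : OP Om wl wu (fun y => - v₂ y) (fun y => - u₂ y) dl du)
    (l : ∀ x ∈ Om, pl x ≤ wl x) :
    ∀ x ∈ Om, u₁ x ≤ dl x ∧ v₁ x ≤ du x := by
  refine h₁.cmp hOm hd.hc fun ε hε x hx => ?_
  refine (h₂.dense hOm hε hx).mono ?_
  rintro y a hy
  linarith [h.lo y hy, hd.lo y hy, hd.hc.le y hy, l y hy]

theorem OP.unshift {n : ℕ} {Om : Set (Pt n)} (hOm : IsOpen Om)
    {u₁ v₁ u₂ v₂ pl pu wl wu dl du : Pt n → ℝ}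
    (hw : HC Om wl wu) (h₂ : HC Om u₂ v₂)
    (h : OP Om u₁ v₁ u₂ v₂ pl pu)
    (hd : OP Om wl wu (fun y => - v₂ y) (fun y => - u₂ y) dl du)
    (l : ∀ x ∈ Om, v₁ x ≤ du x) :
    ∀ x ∈ Om, pl x ≤ wl x ∧ pu x ≤ wu x := by
  refine h.hc.cmp hOm hw fun ε hε x hx => ?_
  refine (h₂.dense hOm hε hx).mono ?_
  rintro y a hy
  linarith [h.hi y hy, hd.hi y hy, h.hc.le y hy, l y hy]

theorem OP.sup {n : ℕ} {Om : Set (Pt n)} (hOm : IsOpen Om)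
    {u₁ v₁ u₂ v₂ pl pu wl wu : Pt n → ℝ} {al au bl bu cl cu : ℕ → Pt n → ℝ}
    (h₁ : HC Om u₁ v₁) (h₂ : HC Om u₂ v₂) (h : OP Om u₁ v₁ u₂ v₂ pl pu)
    (ha : ∀ k, HC Om (al k) (au k)) (hb : ∀ k, HC Om (bl k) (bu k))
    (hc : ∀ k, OP Om (al k) (au k) (bl k) (bu k) (cl k) (cu k))
    (ma : ∀ k, ∀ x ∈ Om, al k x ≤ al (k + 1) x)
    (mb : ∀ k, ∀ x ∈ Om, bl k x ≤ bl (k + 1) x)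
    (la : ∀ wl wu, HC Om wl wu → (∀ k, ∀ x ∈ Om, al k x ≤ wl x ∧ au k x ≤ wu x) →
      ∀ x ∈ Om, u₁ x ≤ wl x ∧ v₁ x ≤ wu x)
    (lb : ∀ wl wu, HC Om wl wu → (∀ k, ∀ x ∈ Om, bl k x ≤ wl x ∧ bu k x ≤ wu x) →
      ∀ x ∈ Om, u₂ x ≤ wl x ∧ v₂ x ≤ wu x)
    (hw : HC Om wl wu) (lw : ∀ k, ∀ x ∈ Om, cl k x ≤ wl x ∧ cu k x ≤ wu x) :
    ∀ x ∈ Om, pl x ≤ wl x ∧ pu x ≤ wu x := by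
  have Ma : ∀ k m, k ≤ m → ∀ x ∈ Om, al k x ≤ al m x := fun k m hkm x hx =>
    monotone_nat_of_le_succ (f := fun k => al k x) (fun k => ma k x hx) hkm
  have Mb : ∀ k m, k ≤ m → ∀ x ∈ Om, bl k x ≤ bl m x := fun k m hkm x hx =>
    monotone_nat_of_le_succ (f := fun k => bl k x) (fun k => mb k x hx) hkm
  -- step 1
  have s1 : ∀ m, ∀ el eu, OP Om u₁ v₁ (bl m) (bu m) el eu →
      ∀ x ∈ Om, el x ≤ wl x ∧ eu x ≤ wu x := by
    intro m el eu he
    obtain ⟨dl, du, hd⟩ := exists_OP hOm hw (hb m).neg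
    refine OP.unshift hOm hw (hb m) he hd fun x hx => (la dl du hd.hc ?_ x hx).2
    intro k
    obtain ⟨ql, qu, hq⟩ := exists_OP hOm (ha k) (hb m)
    refine OP.shift hOm (ha k) (hb m) hq hd fun x hx => ?_
    have := OP.mono hOm (ha k) (hb m) hq (hc (max k m)) (Ma _ _ (le_max_left _ _))
      (Mb _ _ (le_max_right _ _)) x hx
    exact this.1.trans (lw _ x hx).1
  obtain ⟨dl, du, hd⟩ := exists_OP hOm hw h₁.neg
  refine OP.unshift hOm hw h₁ h.comm hd fun x hx => (lb dl du hd.hc ?_ x hx).2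
  intro m
  obtain ⟨el, eu, he⟩ := exists_OP hOm h₁ (hb m)
  exact OP.shift hOm (hb m) h₁ he.comm hd fun x hx => (s1 m el eu he x hx).1

theorem HC.cont {n : ℕ} {Om : Set (Pt n)} (hOm : IsOpen Om) {f u v u' v' : Pt n → ℝ}
    (hf : ContinuousOn f Om) (h : HC Om u v) (h' : HC Om u' v')
    (l : ∀ x ∈ Om, u x ≤ f x) (l' : ∀ x ∈ Om, f x ≤ v' x) : HC Om f f := by
  have hcont : ∀ x ∈ Om, ContinuousAt f x := fun x hx => hf.continuousAt (hOm.mem_nhds hx)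
  refine ⟨fun x _ => le_rfl, ?_, ?_, ?_, ?_, ?_, ?_⟩
  · intro R
    obtain ⟨M, hM⟩ := h'.ba R
    exact ⟨M, fun y hy hR => (l' y hy).trans (hM y hy hR)⟩
  · intro R
    obtain ⟨M, hM⟩ := h.bb R
    exact ⟨M, fun y hy hR => (hM y hy hR).trans (l y hy)⟩
  · exact fun x hx c hc => (hcont x hx).eventually_const_lt hc
  · exact fun x hx c hc => (hcont x hx).eventually_lt_const hc
  · exact fun x hx c hc => ((hcont x hx).eventually_const_lt hc).frequently
  · exact fun x hx c hc => ((hcont x hx).eventually_lt_const hc).frequently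

theorem stmt19 {n : ℕ} (Om : Set (Pt n)) (hOm : IsOpen Om)
    (u₁ v₁ u₂ v₂ : Pt n → ℝ)
    (h₁ : HContPair Om u₁ v₁) (h₂ : HContPair Om u₂ v₂)
    (f g : ℕ → Pt n → ℝ)
    (hcf : ∀ k, ContinuousOn (f k) Om) (hcg : ∀ k, ContinuousOn (g k) Om)
    (hCf : OrderCauchySeq Om f) (hCg : OrderCauchySeq Om g)
    (hconvf : OrderConvH Om (fun k => (f k, f k)) (u₁, v₁))
    (hconvg : OrderConvH Om (fun k => (g k, g k)) (u₂, v₂)) :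
    (∃ pl pu : Pt n → ℝ, IsOplus Om u₁ v₁ u₂ v₂ pl pu) ∧
    ∀ pl pu : Pt n → ℝ, IsOplus Om u₁ v₁ u₂ v₂ pl pu →
      OrderConvH Om
        (fun k => ((fun x => f k x + g k x), (fun x => f k x + g k x)))
        (pl, pu) := by

  have H₁ := HC_of_pair hOm h₁
  have H₂ := HC_of_pair hOm h₂
  constructor
  · obtain ⟨pl, pu, h⟩ := exists_OP hOm H₁ H₂
    exact ⟨pl, pu, h.hc.pair hOm, fun x hx => ⟨h.lo x hx, h.hc.le x hx, h.hi x hx⟩⟩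
  intro pl pu hp
  have hP : OP Om u₁ v₁ u₂ v₂ pl pu :=
    ⟨HC_of_pair hOm hp.1, fun x hx => (hp.2 x hx).1, fun x hx => (hp.2 x hx).2.2⟩
  obtain ⟨a, b, ha, hb, ma, mb, hab, ua, la, ub, lb⟩ := hconvf
  obtain ⟨a', b', ha', hb', ma', mb', hab', ua', la', ub', lb'⟩ := hconvg
  replace ha := fun k => HC_of_pair hOm (ha k)
  replace hb := fun k => HC_of_pair hOm (hb k)
  replace ha' := fun k => HC_of_pair hOm (ha' k)
  replace hb' := fun k => HC_of_pair hOm (hb' k)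
  choose cl cu hc using fun k => exists_OP hOm (ha k) (ha' k)
  choose dl du hd using fun k => exists_OP hOm (hb k) (hb' k)
  have hf : ∀ k, HC Om (f k) (f k) := fun k => HC.cont hOm (hcf k) (ha k) (hb k)
    (fun x hx => ((hab k).1 x hx).1) (fun x hx => ((hab k).2 x hx).2)
  have hg : ∀ k, HC Om (g k) (g k) := fun k => HC.cont hOm (hcg k) (ha' k) (hb' k)
    (fun x hx => ((hab' k).1 x hx).1) (fun x hx => ((hab' k).2 x hx).2)
  have hfg : ∀ k, OP Om (f k) (f k) (g k) (g k) (fun x => f k x + g k x)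
      (fun x => f k x + g k x) := by
    intro k
    obtain ⟨ql, qu, hq⟩ := exists_OP hOm (hf k) (hg k)
    refine ⟨HC.cont hOm ((hcf k).add (hcg k)) hq.hc hq.hc (fun x hx => ?_) (fun x hx => ?_),
      fun x _ => le_rfl, fun x _ => le_rfl⟩
    · exact (hq.hc.le x hx).trans (hq.hi x hx)
    · exact (hq.lo x hx).trans (hq.hc.le x hx)
  refine ⟨fun k => (cl k, cu k), fun k => (dl k, du k), fun k => (hc k).hc.pair hOm,
    fun k => (hd k).hc.pair hOm, ?_, ?_, ?_, ?_, ?_, ?_, ?_⟩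
  · exact fun k => OP.mono hOm (ha k) (ha' k) (hc k) (hc (k + 1))
      (fun x hx => (ma k x hx).1) (fun x hx => (ma' k x hx).1)
  · exact fun k => OP.mono hOm (hb (k + 1)) (hb' (k + 1)) (hd (k + 1)) (hd k)
      (fun x hx => (mb k x hx).1) (fun x hx => (mb' k x hx).1)
  · exact fun k => ⟨OP.mono hOm (ha k) (ha' k) (hc k) (hfg k)
      (fun x hx => ((hab k).1 x hx).1) (fun x hx => ((hab' k).1 x hx).1),
      OP.mono hOm (hf k) (hg k) (hfg k) (hd k)
      (fun x hx => ((hab k).2 x hx).1) (fun x hx => ((hab' k).2 x hx).1)⟩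
  · exact fun k => OP.mono hOm (ha k) (ha' k) (hc k) hP
      (fun x hx => (ua k x hx).1) (fun x hx => (ua' k x hx).1)
  · intro w hw hk
    exact OP.sup hOm H₁ H₂ hP ha ha' hc (fun k x hx => (ma k x hx).1)
      (fun k x hx => (ma' k x hx).1)
      (fun wl wu hw h => la (wl, wu) (hw.pair hOm) h)
      (fun wl wu hw h => la' (wl, wu) (hw.pair hOm) h) (HC_of_pair hOm hw) hk
  · exact fun k => OP.mono hOm H₁ H₂ hP (hd k)
      (fun x hx => (ub k x hx).1) (fun x hx => (ub' k x hx).1)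
  · intro w hw hk
    have key := OP.sup hOm H₁.neg H₂.neg hP.neg (fun k => (hb k).neg) (fun k => (hb' k).neg)
      (fun k => (hd k).neg)
      (fun k x hx => neg_le_neg (mb k x hx).2) (fun k x hx => neg_le_neg (mb' k x hx).2)
      (fun wl wu hw h => by
        have := lb (fun y => - wu y, fun y => - wl y) (hw.neg.pair hOm)
          (fun k x hx => ⟨neg_le.mp (h k x hx).2, neg_le.mp (h k x hx).1⟩)
        exact fun x hx => ⟨neg_le.mp (this x hx).2, neg_le.mp (this x hx).1⟩)
      (fun wl wu hw h => by
        have := lb' (fun y => - wu y, fun y => - wl y) (hw.neg.pair hOm)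
          (fun k x hx => ⟨neg_le.mp (h k x hx).2, neg_le.mp (h k x hx).1⟩)
        exact fun x hx => ⟨neg_le.mp (this x hx).2, neg_le.mp (this x hx).1⟩)
      (HC_of_pair hOm hw).neg
      (fun k x hx => ⟨neg_le_neg (hk k x hx).2, neg_le_neg (hk k x hx).1⟩)
    exact fun x hx => ⟨neg_le_neg_iff.mp (key x hx).2, neg_le_neg_iff.mp (key x hx).1⟩
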